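/- There exist constants c₁, c₂ ∈ ℕ such that for every 2-VASS V = (Q,T) there exist a natural number D ≤ (|Q| + ‖T‖)^{c₁} and a finite set R of linear path schemes over V such that, writing O = [D,∞)×[D,∞) ⊆ ℕ²: for every state q ∈ Q and all u,v ∈ O, q(u) →*_{ℕ²} q(v) holds if and only if q(u) →^R_{ℕ²} q(v) holds; moreover every ρ ∈ R has length at most (|Q| + ‖T‖)^{c₂} and at most two cycles. -/

import Mathlib

namespace VASS

/-- Integer vectors of dimension `d`. -/
abbrev Vec (d : ℕ) := Fin d → ℤ

/-- A transition of a `d`-VASS: source state, update vector, target state. -/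
abbrev Trans (d : ℕ) := ℕ × Vec d × ℕ

/-- The norm of a vector: maximum of absolute values of its components. -/
def vnorm {d : ℕ} (z : Vec d) : ℕ := Finset.univ.sup fun i => (z i).natAbs

/-- The norm of a transition set. -/
def tnorm {d : ℕ} (T : Finset (Trans d)) : ℕ := T.sup fun t => vnorm t.2.1

/-- The displacement of a word of transitions. -/
def disp {d : ℕ} (π : List (Trans d)) : Vec d := (π.map fun t => t.2.1).sum

/-- `IsPathFrom p q π` : `π` is a path from `p` to `q`. -/
def IsPathFrom {d : ℕ} : ℕ → ℕ → List (Trans d) → Prop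
  | p, q, [] => p = q
  | p, q, t :: rest => t.1 = p ∧ IsPathFrom t.2.2 q rest

/-- ℕ^d as a subset of ℤ^d. -/
def NatSet (d : ℕ) : Set (Vec d) := {v | ∀ i, 0 ≤ v i}

/-- `p(u) →^π_A q(v)`. -/
def Run {d : ℕ} (T : Finset (Trans d)) (A : Set (Vec d)) (p : ℕ) (u : Vec d)
    (q : ℕ) (v : Vec d) (π : List (Trans d)) : Prop :=
  (∀ t ∈ π, t ∈ T) ∧ IsPathFrom p q π ∧ u ∈ A ∧ v = u + disp π ∧
    ∀ i, 1 ≤ i → i ≤ π.length → u + disp (π.take i) ∈ A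

/-- `p(u) →*_A q(v)`. -/
def Reach {d : ℕ} (T : Finset (Trans d)) (A : Set (Vec d)) (p : ℕ) (u : Vec d)
    (q : ℕ) (v : Vec d) : Prop := ∃ π, Run T A p u q v π

/-- A linear path scheme `α₀ β₁* α₁ ⋯ β_k* α_k`, presented as the initial
segment `α₀` together with the list of pairs `(βᵢ, αᵢ)`. -/
abbrev LPS (d : ℕ) := List (Trans d) × List (List (Trans d) × List (Trans d))

/-- The underlying word `α₀ β₁ α₁ ⋯ β_k α_k` of a linear path scheme. -/
def lpsSupport {d : ℕ} (ρ : LPS d) : List (Trans d) :=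
  ρ.1 ++ (ρ.2.map fun s => s.1 ++ s.2).flatten

/-- The length of a linear path scheme. -/
def lpsLen {d : ℕ} (ρ : LPS d) : ℕ := (lpsSupport ρ).length

/-- The number of cycles of a linear path scheme. -/
def numCycles {d : ℕ} (ρ : LPS d) : ℕ := ρ.2.length

/-- `ρ` is a linear path scheme from `p` to `q` over the transition set `T`:
its underlying word uses transitions from `T` and is a path from `p` to `q`,
and each `βᵢ` is a cycle. -/
def IsLPSFrom {d : ℕ} (T : Finset (Trans d)) (p q : ℕ) (ρ : LPS d) : Prop :=
  (∀ t ∈ lpsSupport ρ, t ∈ T) ∧ IsPathFrom p q (lpsSupport ρ) ∧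
    ∀ s ∈ ρ.2, s.1 ≠ [] ∧ ∃ r, IsPathFrom r r s.1

/-- The word `α₀ β₁^{e₁} α₁ ⋯ β_k^{e_k} α_k` of a linear path scheme. -/
def lpsWord {d : ℕ} (ρ : LPS d) (e : List ℕ) : List (Trans d) :=
  ρ.1 ++ (List.zipWith (fun s n => (List.replicate n s.1).flatten ++ s.2) ρ.2 e).flatten

/-- Membership in the language of a linear path scheme. -/
def InLang {d : ℕ} (ρ : LPS d) (π : List (Trans d)) : Prop :=
  ∃ e : List ℕ, e.length = numCycles ρ ∧ π = lpsWord ρ e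

/-- `p(u) →^S_A q(v)` for a finite set `S` of linear path schemes. -/
def SReach {d : ℕ} (T : Finset (Trans d)) (S : Finset (LPS d)) (A : Set (Vec d))
    (p : ℕ) (u : Vec d) (q : ℕ) (v : Vec d) : Prop :=
  ∃ ρ ∈ S, ∃ π, InLang ρ π ∧ Run T A p u q v π

/-- δ(ρ): the set of displacements of words in the language of `ρ`. -/
def DispSet {d : ℕ} (ρ : LPS d) : Set (Vec d) := {z | ∃ π, InLang ρ π ∧ z = disp π}

/-- A quadrant of ℤ². -/
def IsQuadrant (Z : Set (Vec 2)) : Prop :=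
  ∃ ε : Fin 2 → Bool, Z = {v | ∀ i, if ε i then 0 ≤ v i else v i ≤ 0}

/-- A linear path scheme is zigzag-free if the displacements of all its cycles
lie in a single quadrant. -/
def ZigzagFree (ρ : LPS 2) : Prop :=
  ∃ Z, IsQuadrant Z ∧ ∀ s ∈ ρ.2, disp s.1 ∈ Z

section basics
variable {d : ℕ}

theorem disp_nil : disp ([] : List (Trans d)) = 0 := by simp [disp]

theorem disp_append (a b : List (Trans d)) : disp (a ++ b) = disp a + disp b := by
  simp [disp]

theorem disp_perm {a b : List (Trans d)} (h : a.Perm b) : disp a = disp b :=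
  (h.map _).sum_eq

theorem disp_rep (n : ℕ) (b : List (Trans d)) (i : Fin d) :
    disp (List.replicate n b).flatten i = n * disp b i := by
  induction n with
  | zero => simp [disp]
  | succ n ih =>
    rw [List.replicate_succ, List.flatten_cons, disp_append, Pi.add_apply, ih]
    push_cast; ring

theorem tnorm_bound {T : Finset (Trans d)} {t : Trans d} (ht : t ∈ T) (i : Fin d) :
    |t.2.1 i| ≤ tnorm T := by
  have h1 : vnorm t.2.1 ≤ tnorm T := Finset.le_sup (f := fun t : Trans d => vnorm t.2.1) ht
  have h2 : (t.2.1 i).natAbs ≤ vnorm t.2.1 :=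
    Finset.le_sup (f := fun i => (t.2.1 i).natAbs) (Finset.mem_univ i)
  have := h2.trans h1
  rw [Int.abs_eq_natAbs]; exact_mod_cast this

theorem disp_bound {T : Finset (Trans d)} {π : List (Trans d)} (h : ∀ t ∈ π, t ∈ T) (i : Fin d) :
    |disp π i| ≤ π.length * tnorm T := by
  induction π with
  | nil => simp [disp]
  | cons t r ih =>
    have e : disp (t :: r) i = t.2.1 i + disp r i := by simp [disp]
    have h1 := tnorm_bound (h t (by simp)) i
    have h2 := ih (fun x hx => h x (by simp [hx]))
    have h3 := abs_add_le (t.2.1 i) (disp r i)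
    rw [e]; push_cast [List.length_cons]; linarith

theorem path_append (p q : ℕ) (a b : List (Trans d)) :
    IsPathFrom p q (a ++ b) ↔ ∃ r, IsPathFrom p r a ∧ IsPathFrom r q b := by
  induction a generalizing p with
  | nil => simp [IsPathFrom]
  | cons t r ih => simp [IsPathFrom, ih, and_assoc]

theorem path_rep (r : ℕ) (b : List (Trans d)) (h : IsPathFrom r r b) (n : ℕ) :
    IsPathFrom r r (List.replicate n b).flatten := by
  induction n with
  | zero => simp [IsPathFrom]
  | succ n ih =>
    rw [List.replicate_succ, List.flatten_cons, path_append]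
    exact ⟨r, h, ih⟩

theorem mem_rep {n : ℕ} {b : List (Trans d)} {t : Trans d} (h : t ∈ (List.replicate n b).flatten) :
    t ∈ b := by
  simp only [List.mem_flatten, List.mem_replicate] at h
  obtain ⟨l, ⟨_, rfl⟩, h⟩ := h
  exact h

/-- visited states -/
def Vis (p : ℕ) (π : List (Trans d)) (r : ℕ) : Prop := r = p ∨ ∃ t ∈ π, t.2.2 = r

theorem vis_end {p r : ℕ} {a : List (Trans d)} (h : IsPathFrom p r a) : Vis p a r := by
  induction a generalizing p with
  | nil => exact Or.inl h.symm
  | cons t l ih =>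
    rcases ih h.2 with h1 | ⟨x, hx, h1⟩
    · exact Or.inr ⟨t, by simp, h1.symm⟩
    · exact Or.inr ⟨x, by simp [hx], h1⟩

theorem vis_split {p q r : ℕ} {a : List (Trans d)} (h : IsPathFrom p q a) (hv : Vis p a r) :
    ∃ b c, a = b ++ c ∧ IsPathFrom p r b ∧ IsPathFrom r q c := by
  rcases hv with rfl | ⟨t, ht, rfl⟩
  · exact ⟨[], a, by simp, rfl, h⟩
  · obtain ⟨b, c, rfl⟩ := List.append_of_mem ht
    have e : b ++ t :: c = (b ++ [t]) ++ c := by simp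
    rw [e] at h ⊢
    rw [path_append] at h
    obtain ⟨r, h1, h2⟩ := h
    rw [path_append] at h1
    obtain ⟨r', h3, h4⟩ := h1
    have h4' := h4.2
    simp only [IsPathFrom] at h4'
    refine ⟨_, _, rfl, ?_, h4' ▸ h2⟩
    rw [path_append]
    exact ⟨r', h3, h4.1, rfl⟩

theorem vis_append_split {p q : ℕ} {a : List (Trans d)} (h : IsPathFrom p q a) (i : ℕ) :
    ∃ r, IsPathFrom p r (a.take i) ∧ IsPathFrom r q (a.drop i) := by
  rw [← path_append, List.take_append_drop]; exact h

/-- A path of length at least `|Q|` contains a cycle. -/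
theorem exists_cycle {Q : Finset ℕ} {T : Finset (Trans d)} (hT : ∀ t ∈ T, t.1 ∈ Q ∧ t.2.2 ∈ Q)
    {p q : ℕ} {π : List (Trans d)} (hp : p ∈ Q) (hπ : IsPathFrom p q π) (hπT : ∀ t ∈ π, t ∈ T)
    (hl : Q.card ≤ π.length) :
    ∃ a b c r, π = a ++ b ++ c ∧ b ≠ [] ∧ IsPathFrom p r a ∧ IsPathFrom r r b ∧
      IsPathFrom r q c := by
  choose f hf1 hf2 using fun i => vis_append_split hπ i
  have hmem : ∀ i ∈ Finset.range (Q.card + 1), f i ∈ Q := by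
    intro i _
    rcases vis_end (hf1 i) with h | ⟨t, ht, h⟩
    · rw [h]; exact hp
    · rw [← h]; exact (hT t (hπT t (List.mem_of_mem_take ht))).2
  obtain ⟨i, hi, j, hj, hij, he⟩ :=
    Finset.exists_ne_map_eq_of_card_lt_of_maps_to (s := Finset.range (Q.card + 1)) (t := Q)
      (by simp) hmem
  simp only [Finset.mem_range] at hi hj
  wlog hlt : i < j generalizing i j
  · exact this j i (Ne.symm hij) he.symm hj hi (by omega)
  refine ⟨π.take i, (π.take j).drop i, π.drop j, f i, ?_, ?_, hf1 i, ?_, he ▸ hf2 j⟩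
  · have : π.take i = (π.take j).take i := by rw [List.take_take, min_eq_left hlt.le]
    rw [this, List.take_append_drop, List.take_append_drop]
  · intro h
    have := congrArg List.length h
    simp at this; omega
  · have h := vis_append_split (hf1 j) i
    obtain ⟨r, h1, h2⟩ := h
    rw [List.take_take, min_eq_left hlt.le] at h1
    have : r = f i := by
      have aux : ∀ (l : List (Trans d)) (p a b : ℕ), IsPathFrom p a l → IsPathFrom p b l → a = b := by
        intro l
        induction l with
        | nil => intro p a b h1 h2; exact h1.symm.trans h2
        | cons t l ih => intro p a b h1 h2; exact ih _ _ _ h1.2 h2.2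
      exact aux _ _ _ _ h1 (hf1 i)
    rw [this] at h2
    rwa [← he] at h2

theorem extract {Q : Finset ℕ} {T : Finset (Trans d)} (hT : ∀ t ∈ T, t.1 ∈ Q ∧ t.2.2 ∈ Q)
    {q : ℕ} (m : ℕ) : ∀ (S : Finset ℕ) (p : ℕ) (π : List (Trans d)), p ∈ Q → IsPathFrom p q π →
    (∀ t ∈ π, t ∈ T) → Q.card * (m + 1) ≤ π.length → (Q \ S).card ≤ m →
    ∃ a b c r, π = a ++ b ++ c ∧ b ≠ [] ∧ b.length ≤ Q.card ∧ IsPathFrom p r a ∧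
      IsPathFrom r r b ∧ IsPathFrom r q c ∧ ∀ t ∈ b, t.2.2 ∈ S ∨ ∃ t' ∈ a, t'.2.2 = t.2.2 := by
  induction m with
  | zero =>
    intro S p π hp hπ hπT hl hS
    obtain ⟨r, h1, h2⟩ := vis_append_split hπ Q.card
    obtain ⟨a, b, c, s, e, hb, g1, g2, g3⟩ := exists_cycle hT hp h1
      (fun t ht => hπT t (List.mem_of_mem_take ht)) (by simp; omega)
    refine ⟨a, b, c ++ π.drop Q.card, s, ?_, hb, ?_, g1, g2, ?_, ?_⟩
    · rw [← List.append_assoc, ← e, List.take_append_drop]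
    · have := congrArg List.length e
      simp at this; omega
    · rw [path_append]; exact ⟨r, g3, h2⟩
    · intro t ht
      left
      have h0 : Q \ S = ∅ := by simpa using hS
      rw [Finset.sdiff_eq_empty_iff_subset] at h0
      apply h0
      refine (hT t (hπT t (List.mem_of_mem_take (i := Q.card) ?_))).2
      rw [e]; simp [ht]
  | succ m ih =>
    intro S p π hp hπ hπT hl hS
    obtain ⟨r, h1, h2⟩ := vis_append_split hπ Q.card
    by_cases hall : ∀ t ∈ π.take Q.card, t.2.2 ∈ S
    · obtain ⟨a, b, c, s, e, hb, g1, g2, g3⟩ := exists_cycle hT hp h1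
        (fun t ht => hπT t (List.mem_of_mem_take ht)) (by simp; nlinarith)
      refine ⟨a, b, c ++ π.drop Q.card, s, ?_, hb, ?_, g1, g2, ?_, ?_⟩
      · rw [← List.append_assoc, ← e, List.take_append_drop]
      · have := congrArg List.length e
        simp at this; omega
      · rw [path_append]; exact ⟨r, g3, h2⟩
      · intro t ht
        left
        apply hall
        rw [e]; simp [ht]
    · push Not at hall
      obtain ⟨t0, ht0, hn⟩ := hall
      have hq0 : t0.2.2 ∈ Q := (hT t0 (hπT t0 (List.mem_of_mem_take ht0))).2
      have hr : r ∈ Q := by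
        rcases vis_end h1 with h | ⟨t, ht, h⟩
        · rw [h]; exact hp
        · rw [← h]; exact (hT t (hπT t (List.mem_of_mem_take ht))).2
      obtain ⟨a, b, c, s, e, hb, hbl, g1, g2, g3, g4⟩ := ih (insert t0.2.2 S) r (π.drop Q.card) hr h2
        (fun t ht => hπT t (List.mem_of_mem_drop ht)) (by
          rw [List.length_drop]
          have : Q.card * (m + 1 + 1) = Q.card * (m + 1) + Q.card := by ring
          omega) (by
          have : (Q \ insert t0.2.2 S) ⊂ Q \ S := by
            rw [Finset.ssubset_iff_of_subset]
            · exact ⟨t0.2.2, by simp [hq0, hn], by simp⟩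
            · exact Finset.sdiff_subset_sdiff (le_refl _) (Finset.subset_insert _ _)
          have := Finset.card_lt_card this
          omega)
      refine ⟨π.take Q.card ++ a, b, c, s, ?_, hb, hbl, ?_, g2, g3, ?_⟩
      · conv_lhs => rw [← List.take_append_drop Q.card π, e]
        simp
      · rw [path_append]; exact ⟨r, h1, g1⟩
      · intro t ht
        rcases g4 t ht with h | ⟨t', ht', h⟩
        · rw [Finset.mem_insert] at h
          rcases h with h | h
          · exact Or.inr ⟨t0, by simp [ht0], h.symm⟩
          · exact Or.inl h
        · exact Or.inr ⟨t', by simp [ht'], h⟩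

/-- cycles attached to the path `π₀` -/
def CycOn (T : Finset (Trans d)) (n p : ℕ) (π₀ c : List (Trans d)) : Prop :=
  (∀ t ∈ c, t ∈ T) ∧ c.length ≤ n ∧ ∃ r, Vis p π₀ r ∧ IsPathFrom r r c

theorem skeleton {Q : Finset ℕ} {T : Finset (Trans d)} (hT : ∀ t ∈ T, t.1 ∈ Q ∧ t.2.2 ∈ Q)
    {p q : ℕ} (hp : p ∈ Q) (k : ℕ) : ∀ (π : List (Trans d)), π.length = k → IsPathFrom p q π →
    (∀ t ∈ π, t ∈ T) →
    ∃ (π₀ : List (Trans d)) (E : List (List (Trans d))), IsPathFrom p q π₀ ∧ (∀ t ∈ π₀, t ∈ T) ∧ π₀.length ≤ Q.card * (Q.card + 1) ∧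
      (∀ r, Vis p π r → Vis p π₀ r) ∧ (∀ c ∈ E, CycOn T Q.card p π₀ c) ∧
      disp π = disp π₀ + disp E.flatten := by
  induction k using Nat.strong_induction_on with
  | _ k ih =>
  intro π hk hπ hπT
  by_cases hs : π.length ≤ Q.card * (Q.card + 1)
  · exact ⟨π, [], hπ, hπT, hs, fun r h => h, by simp, by simp [disp]⟩
  · obtain ⟨a, b, c, r, rfl, hb, hbl, g1, g2, g3, g4⟩ := extract hT Q.card ∅ p π hp hπ hπT
      (by omega) (by simp)
    have hb' : 0 < b.length := List.length_pos_iff.mpr hb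
    obtain ⟨π₀, E, e1, e2, e3, e4, e5, e6⟩ := ih (a ++ c).length (by simp at hk ⊢; omega) (a ++ c) rfl
      (by rw [path_append]; exact ⟨r, g1, g3⟩)
      (fun t ht => hπT t (by simp at ht ⊢; tauto))
    have hv : ∀ s, Vis p (a ++ b ++ c) s → Vis p (a ++ c) s := by
      rintro s (h | ⟨t, ht, h⟩)
      · exact Or.inl h
      · simp only [List.mem_append] at ht
        rcases ht with (ht | ht) | ht
        · exact Or.inr ⟨t, by simp [ht], h⟩
        · rcases g4 t ht with h' | ⟨t', ht', h'⟩
          · simp at h'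
          · exact Or.inr ⟨t', by simp [ht'], h'.trans h⟩
        · exact Or.inr ⟨t, by simp [ht], h⟩
    have hvr : Vis p (a ++ c) r := by
      rcases vis_end g1 with h | ⟨t, ht, h⟩
      · exact Or.inl h
      · exact Or.inr ⟨t, by simp [ht], h⟩
    refine ⟨π₀, b :: E, e1, e2, e3, fun s h => e4 s (hv s h), ?_, ?_⟩
    · intro x hx
      rcases List.mem_cons.mp hx with rfl | hx
      · exact ⟨fun t ht => hπT t (by simp [ht]), hbl, r, e4 r hvr, g2⟩
      · exact e5 x hx
    · rw [List.flatten_cons, disp_append, disp_append, disp_append]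
      rw [disp_append] at e6
      rw [add_right_comm, e6]; abel

theorem insertion {T : Finset (Trans d)} {n p q : ℕ} {π₀ : List (Trans d)}
    (h0 : IsPathFrom p q π₀) (hT : ∀ t ∈ π₀, t ∈ T) (E : List (List (Trans d))) :
    (∀ c ∈ E, CycOn T n p π₀ c) →
    ∃ π₁, IsPathFrom p q π₁ ∧ (∀ t ∈ π₁, t ∈ T) ∧ disp π₁ = disp π₀ + disp E.flatten ∧
      π₁.length ≤ π₀.length + E.length * n ∧ ∀ r, Vis p π₀ r → Vis p π₁ r := by
  induction E with
  | nil => intro _; exact ⟨π₀, h0, hT, by simp [disp], by simp, fun r h => h⟩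
  | cons c E ih =>
    intro hE
    obtain ⟨π₁, g1, g2, g3, g4, g5⟩ := ih (fun x hx => hE x (by simp [hx]))
    obtain ⟨c1, c2, r, c3, c4⟩ := hE c (by simp)
    obtain ⟨a, b, rfl, h1, h2⟩ := vis_split g1 (g5 r c3)
    refine ⟨a ++ (c ++ b), ?_, ?_, ?_, ?_, ?_⟩
    · rw [path_append]; refine ⟨r, h1, ?_⟩
      rw [path_append]; exact ⟨r, c4, h2⟩
    · intro t ht
      simp only [List.mem_append] at ht
      rcases ht with ht | ht | ht
      · exact g2 t (by simp [ht])
      · exact c1 t ht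
      · exact g2 t (by simp [ht])
    · rw [List.flatten_cons, disp_append, disp_append, disp_append]
      rw [disp_append] at g3
      rw [add_left_comm, g3]; abel
    · simp only [List.length_append, List.length_cons, add_mul, one_mul] at g4 ⊢
      omega
    · intro s hs
      rcases g5 s hs with h | ⟨t, ht, h⟩
      · exact Or.inl h
      · refine Or.inr ⟨t, ?_, h⟩
        simp at ht ⊢; tauto
end basics

section blocks
variable {α : Type}

theorem arrange (g : α → ℤ) (M : ℤ) (n : ℕ) : ∀ (l : List α), l.length = n →
    (∀ x ∈ l, |g x| ≤ M) → ∀ s : ℤ, |s| ≤ M → s + (l.map g).sum = 0 →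
    ∃ l' : List α, l.Perm l' ∧ ∀ k, |s + ((l'.take k).map g).sum| ≤ M := by
  induction n with
  | zero =>
    intro l hl _ s hs _
    rw [List.length_eq_zero_iff] at hl
    subst hl
    exact ⟨[], List.Perm.refl _, by simpa using hs⟩
  | succ n ih =>
    intro l hl hg s hs h0
    have key : ∃ x ∈ l, |s + g x| ≤ M := by
      by_contra hcon
      push Not at hcon
      have hs' := abs_le.mp hs
      rcases lt_or_ge 0 s with hp | hp
      · have : ∀ x ∈ l, 0 ≤ g x := by
          intro x hx
          by_contra hneg
          have h1 := hcon x hx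
          have h2 := abs_le.mp (hg x hx)
          have : |s + g x| ≤ M := abs_le.mpr ⟨by linarith, by linarith⟩
          linarith
        have : 0 ≤ (l.map g).sum := List.sum_nonneg (by
          intro y hy
          obtain ⟨x, hx, rfl⟩ := List.mem_map.mp hy
          exact this x hx)
        linarith
      · have h3 : ∀ x ∈ l, g x < 0 := by
          intro x hx
          by_contra hneg
          have h1 := hcon x hx
          have h2 := abs_le.mp (hg x hx)
          have : |s + g x| ≤ M := abs_le.mpr ⟨by linarith, by linarith⟩
          linarith
        have h4 : ∀ l : List α, (∀ x ∈ l, g x < 0) → l ≠ [] → (l.map g).sum < 0 := by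
          intro l
          induction l with
          | nil => simp
          | cons a l ih2 =>
            intro h _
            have ha := h a (by simp)
            rcases eq_or_ne l [] with rfl | hne
            · simpa using ha
            · have := ih2 (fun x hx => h x (by simp [hx])) hne
              simp; linarith
        have := h4 l h3 (by rintro rfl; simp at hl)
        linarith
    obtain ⟨x, hx, hxs⟩ := key
    obtain ⟨b, c, rfl⟩ := List.append_of_mem hx
    have hperm : (b ++ x :: c).Perm (x :: (b ++ c)) := List.perm_middle
    obtain ⟨l', hl', hk⟩ := ih (b ++ c) (by simp at hl ⊢; omega)
      (fun y hy => hg y (by simp at hy ⊢; tauto)) (s + g x) hxs (by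
        simp at h0 ⊢; linarith)
    refine ⟨x :: l', hperm.trans (hl'.cons x), ?_⟩
    intro k
    cases k with
    | zero => simpa using hs
    | succ k =>
      have := hk k
      simpa [add_assoc] using this

theorem zero_block (g : α → ℤ) (M : ℕ) (l : List α) (hl : l ≠ []) (hg : ∀ x ∈ l, |g x| ≤ M)
    (h0 : (l.map g).sum = 0) :
    ∃ B R : List α, B ≠ [] ∧ l.Perm (B ++ R) ∧ B.length ≤ 2 * M + 1 ∧ (B.map g).sum = 0 := by
  by_cases hs : l.length ≤ 2 * M + 1
  · exact ⟨l, [], hl, by simp, hs, h0⟩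
  · obtain ⟨l', hp, hk⟩ := arrange g M _ l rfl hg 0 (by simp) (by simpa using h0)
    simp only [zero_add] at hk
    have hlen := hp.length_eq
    obtain ⟨i, hi, j, hj, hij, he⟩ :=
      Finset.exists_ne_map_eq_of_card_lt_of_maps_to (s := Finset.range (2 * M + 2))
        (t := Finset.Icc (-(M : ℤ)) M) (f := fun k => ((l'.take k).map g).sum)
        (by simp; omega) (fun k _ => by
          have := abs_le.mp (hk k)
          simp only [Finset.coe_Icc, Set.mem_Icc]; exact this)
    simp only [Finset.mem_range] at hi hj
    wlog hlt : i < j generalizing i j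
    · exact this j i (Ne.symm hij) he.symm hj hi (by omega)
    have e1 : l'.take j = l'.take i ++ (l'.take j).drop i := by
      have : l'.take i = (l'.take j).take i := by rw [List.take_take, min_eq_left hlt.le]
      rw [this, List.take_append_drop]
    refine ⟨(l'.take j).drop i, l'.take i ++ l'.drop j, ?_, ?_, ?_, ?_⟩
    · intro h
      have := congrArg List.length h
      simp at this; omega
    · refine hp.trans ?_
      conv_lhs => rw [← List.take_append_drop j l', e1]
      rw [← List.append_assoc]
      exact List.Perm.append_right _ List.perm_append_comm
    · simp; omega
    · rw [e1, List.map_append, List.sum_append] at he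
      linarith

theorem zero_blocks (g : α → ℤ) (M : ℕ) (n : ℕ) : ∀ (l : List α), l.length = n →
    (∀ x ∈ l, |g x| ≤ M) → (l.map g).sum = 0 →
    ∃ Bs : List (List α), l.Perm Bs.flatten ∧
      ∀ B ∈ Bs, B.length ≤ 2 * M + 1 ∧ (B.map g).sum = 0 := by
  induction n using Nat.strong_induction_on with
  | _ n ih =>
  intro l hn hg h0
  rcases eq_or_ne l [] with rfl | hne
  · exact ⟨[], by simp, by simp⟩
  · obtain ⟨B, R, hB, hp, hBl, hB0⟩ := zero_block g M l hne hg h0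
    have hlen := hp.length_eq
    have : 0 < B.length := List.length_pos_iff.mpr hB
    have hsum := (hp.map g).sum_eq
    obtain ⟨Bs, h1, h2⟩ := ih R.length (by simp at hlen; omega) R rfl
      (fun x hx => hg x (hp.mem_iff.mpr (by simp [hx])))
      (by rw [List.map_append, List.sum_append] at hsum; linarith)
    refine ⟨B :: Bs, ?_, ?_⟩
    · rw [List.flatten_cons]
      exact hp.trans (h1.append_left B)
    · intro x hx
      rcases List.mem_cons.mp hx with rfl | hx
      · exact ⟨hBl, hB0⟩
      · exact h2 x hx

theorem pos_blocks (g : α → ℤ) (M : ℕ) (hM : 1 ≤ M) (l : List α)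
    (hg : ∀ x ∈ l, |g x| ≤ M) (h0 : 0 ≤ (l.map g).sum) :
    ∃ Bs : List (List α), l.Perm Bs.flatten ∧
      ∀ B ∈ Bs, B.length ≤ 2 * M + 1 ∧ 0 ≤ (B.map g).sum := by
  set g' : Option α → ℤ := fun o => o.elim (-1) g with hg'
  obtain ⟨m, hm⟩ := Int.eq_ofNat_of_zero_le h0
  have hred : ∀ B : List (Option α), (B.map g').sum ≤ ((B.reduceOption).map g).sum := by
    intro B
    induction B with
    | nil => simp
    | cons a B ih =>
      cases a with
      | none => simp [hg'] at ih ⊢; linarith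
      | some a => simp [hg'] at ih ⊢; linarith
  obtain ⟨Bs, h1, h2⟩ := zero_blocks g' M _ (l.map some ++ List.replicate m none) rfl (by
      intro x hx
      simp only [List.mem_append, List.mem_map, List.mem_replicate] at hx
      rcases hx with ⟨a, ha, rfl⟩ | ⟨_, rfl⟩
      · exact hg a ha
      · simp [hg']; exact_mod_cast hM) (by
      have : (g' ∘ some) = g := by funext a; simp [hg']
      rw [List.map_append, List.map_map, this, List.sum_append, hm]
      simp [hg'])
  refine ⟨Bs.map List.reduceOption, ?_, ?_⟩
  · have h3 := h1.filterMap id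
    have e1 : List.filterMap id (l.map some ++ List.replicate m none) = l := by
      simp [List.filterMap_append, List.filterMap_map]
    have e2 : List.filterMap id Bs.flatten = (Bs.map List.reduceOption).flatten := by
      rw [List.filterMap_flatten]; rfl
    rwa [e1, e2] at h3
  · intro B hB
    obtain ⟨B', hB', rfl⟩ := List.mem_map.mp hB
    have := h2 B' hB'
    refine ⟨(List.reduceOption_length_le B').trans this.1, ?_⟩
    have := hred B'
    linarith [(h2 B' hB').2]

theorem sign_blocks (g : α → ℤ) (M : ℕ) (hM : 1 ≤ M) (l : List α)
    (hg : ∀ x ∈ l, |g x| ≤ M) :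
    ∃ (Bs : List (List α)) (s : ℤ), (s = 1 ∨ s = -1) ∧ l.Perm Bs.flatten ∧
      ∀ B ∈ Bs, B.length ≤ 2 * M + 1 ∧ 0 ≤ s * (B.map g).sum := by
  rcases le_total 0 (l.map g).sum with h | h
  · obtain ⟨Bs, h1, h2⟩ := pos_blocks g M hM l hg h
    exact ⟨Bs, 1, Or.inl rfl, h1, by simpa using h2⟩
  · have hneg : ∀ l : List α, (l.map fun x => - g x).sum = - (l.map g).sum := by
      intro l; induction l with
      | nil => simp
      | cons a l ih => simp [ih]; ring
    obtain ⟨Bs, h1, h2⟩ := pos_blocks (fun x => - g x) M hM l (by simpa using hg)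
      (by rw [hneg]; linarith)
    refine ⟨Bs, -1, Or.inr rfl, h1, fun B hB => ?_⟩
    have := h2 B hB
    rw [hneg] at this
    exact ⟨this.1, by linarith [this.2]⟩

theorem disp_flatten_apply {d : ℕ} (L : List (List (Trans d))) (i : Fin d) :
    disp L.flatten i = (L.map fun c => disp c i).sum := by
  induction L with
  | nil => simp [disp]
  | cons a L ih => rw [List.flatten_cons, disp_append]; simp [ih]

theorem sum_bound (f : α → ℤ) (M : ℤ) (l : List α) (h : ∀ x ∈ l, |f x| ≤ M) :
    |(l.map f).sum| ≤ l.length * M := by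
  induction l with
  | nil => simp
  | cons a l ih =>
    have h1 := h a (by simp)
    have h2 := ih (fun x hx => h x (by simp [hx]))
    have h3 := abs_add_le (f a) (l.map f).sum
    simp only [List.map_cons, List.sum_cons, List.length_cons]
    push_cast; linarith

theorem flatten_length_le (l : List (List α)) (M : ℕ) (h : ∀ x ∈ l, x.length ≤ M) :
    l.flatten.length ≤ l.length * M := by
  induction l with
  | nil => simp
  | cons a l ih =>
    have h1 := h a (by simp)
    have h2 := ih (fun x hx => h x (by simp [hx]))
    simp only [List.flatten_cons, List.length_append, List.length_cons, add_mul, one_mul]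
    omega

def PB (M : ℕ) : ℕ := (2 * ((2 * M + 1) * M) + 1) * (2 * M + 1)

theorem quad_blocks (M : ℕ) (hM : 1 ≤ M) (L : List (List (Trans 2)))
    (hL : ∀ c ∈ L, ∀ i, |disp c i| ≤ M) :
    ∃ (Bs : List (List (List (Trans 2)))) (s : Fin 2 → ℤ), (∀ i, s i = 1 ∨ s i = -1) ∧
      L.Perm Bs.flatten ∧ ∀ B ∈ Bs, B.length ≤ PB M ∧ ∀ i, 0 ≤ s i * disp B.flatten i := by
  obtain ⟨Bs, s0, hs0, hp, hB⟩ := sign_blocks (fun c => disp c 0) M hM L (fun c hc => hL c hc 0)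
  obtain ⟨Cs, s1, hs1, hp1, hC⟩ := sign_blocks (fun B : List (List (Trans 2)) => disp B.flatten 1)
    ((2 * M + 1) * M) (by nlinarith) Bs (by
      intro B hB'
      rw [disp_flatten_apply]
      have h1 := sum_bound (fun c : List (Trans 2) => disp c 1) M B (by
        intro c hc
        refine hL c (hp.mem_iff.mpr ?_) 1
        exact List.mem_flatten.mpr ⟨B, hB', hc⟩)
      have h2 := (hB B hB').1
      have h3 : (B.length : ℤ) ≤ 2 * M + 1 := by exact_mod_cast h2
      push_cast
      nlinarith)
  refine ⟨Cs.map List.flatten, ![s0, s1], ?_, ?_, ?_⟩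
  · intro i; fin_cases i
    · exact hs0
    · exact hs1
  · refine hp.trans ?_
    refine (hp1.flatten).trans ?_
    rw [List.flatten_flatten]
  · intro B hB'
    obtain ⟨C, hCm, rfl⟩ := List.mem_map.mp hB'
    have hmem : ∀ x ∈ C, x ∈ Bs := fun x hx => hp1.mem_iff.mpr (List.mem_flatten.mpr ⟨C, hCm, hx⟩)
    constructor
    · have h1 := flatten_length_le C (2 * M + 1) (fun x hx => (hB x (hmem x hx)).1)
      exact h1.trans (Nat.mul_le_mul_right _ (hC C hCm).1)
    · have hf : ∀ i, disp C.flatten.flatten i = (C.map fun B => disp B.flatten i).sum := by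
        intro i
        rw [List.flatten_flatten, disp_flatten_apply, List.map_map]; rfl
      intro i; fin_cases i
      · show 0 ≤ s0 * disp C.flatten.flatten 0
        rw [hf, ← List.sum_map_mul_left]
        apply List.sum_nonneg
        intro y hy
        obtain ⟨x, hx, rfl⟩ := List.mem_map.mp hy
        rw [disp_flatten_apply]
        exact (hB x (hmem x hx)).2
      · show 0 ≤ s1 * disp C.flatten.flatten 1
        rw [hf]
        exact (hC C hCm).2
end blocks

section lin
variable {α : Type}

theorem carath (l : List α) (a b : α → ℕ) (K : ℕ) (ha : ∀ x ∈ l, a x ≤ K) (hb : ∀ x ∈ l, b x ≤ K)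
    (hne : ∃ x ∈ l, 0 < a x + b x) :
    ∃ i ∈ l, ∃ j ∈ l, 0 < a i + b i ∧ 0 < a j + b j ∧ ∃ e : ℕ, 0 < e ∧ e ≤ K * K + 2 * K ∧
      ∀ x ∈ l, ∃ p r : ℕ, e * a x = p * a i + r * a j ∧ e * b x = p * b i + r * b j := by
  set S : Set α := {x | x ∈ l ∧ 0 < a x + b x} with hS
  have hfin : S.Finite := (List.finite_toSet l).subset (fun x hx => hx.1)
  have hSne : S.Nonempty := by obtain ⟨x, hx⟩ := hne; exact ⟨x, hx⟩
  set f : α → ℚ := fun x => (b x : ℚ) / (a x + b x : ℕ) with hf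
  have hcmp : ∀ x ∈ S, ∀ y ∈ S, f x ≤ f y → b x * a y ≤ b y * a x := by
    intro x hx y hy h
    have h1 : (0 : ℚ) < (a x + b x : ℕ) := by exact_mod_cast hx.2
    have h2 : (0 : ℚ) < (a y + b y : ℕ) := by exact_mod_cast hy.2
    simp only [hf] at h
    rw [div_le_div_iff₀ h1 h2] at h
    have h3 : b x * (a y + b y) ≤ b y * (a x + b x) := by exact_mod_cast h
    nlinarith
  obtain ⟨i, hi, hmin⟩ := Set.exists_min_image S f hfin hSne
  obtain ⟨j, hj, hmax⟩ := Set.exists_max_image S f hfin hSne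
  have hij := hcmp i hi j hj (hmin j hj)
  refine ⟨i, hi.1, j, hj.1, hi.2, hj.2, ?_⟩
  have bi := ha i hi.1
  have bi' := hb i hi.1
  have bj := ha j hj.1
  have bj' := hb j hj.1
  rcases Nat.eq_or_lt_of_le hij with heq | hlt
  · refine ⟨a i + b i, hi.2, by nlinarith, ?_⟩
    intro x hx
    by_cases hx0 : 0 < a x + b x
    · have h1 := hcmp i hi x ⟨hx, hx0⟩ (hmin x ⟨hx, hx0⟩)
      have h2 := hcmp x ⟨hx, hx0⟩ j hj (hmax x ⟨hx, hx0⟩)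
      have h3 : b i * a x = b x * a i := by
        apply le_antisymm h1
        have hi2 := hi.2
        have hj2 := hj.2
        by_contra hcon
        push Not at hcon
        rcases Nat.eq_zero_or_pos (a j) with h0 | h0
        · have hbj : 0 < b j := by omega
          have : a i = 0 := by
            rw [h0] at heq; simp at heq
            rcases heq with h | h
            · omega
            · exact h
          rw [this] at hcon
          simp at hcon
        · have g1 : b x * a j * a i ≤ b j * a x * a i := Nat.mul_le_mul_right _ h2
          have g2 : b i * a x * a j < b x * a i * a j := Nat.mul_lt_mul_of_pos_right hcon h0
          have g3 : b j * a i * a x = b i * a j * a x := by rw [heq]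
          nlinarith
      refine ⟨a x + b x, 0, by ring_nf; nlinarith, by ring_nf; nlinarith⟩
    · refine ⟨0, 0, ?_, ?_⟩ <;> simp <;> right <;> omega
  · refine ⟨b j * a i - b i * a j, by omega, ?_, ?_⟩
    · have : b j * a i ≤ K * K := Nat.mul_le_mul bj' bi
      omega
    intro x hx
    by_cases hx0 : 0 < a x + b x
    · have h1 := hcmp i hi x ⟨hx, hx0⟩ (hmin x ⟨hx, hx0⟩)
      have h2 := hcmp x ⟨hx, hx0⟩ j hj (hmax x ⟨hx, hx0⟩)
      refine ⟨b j * a x - b x * a j, b x * a i - b i * a x, ?_, ?_⟩ <;> zify [h1, h2, hij] <;> ring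
    · have hax : a x = 0 := by omega
      have hbx : b x = 0 := by omega
      exact ⟨0, 0, by simp [hax], by simp [hbx]⟩

theorem reduce (y : α → Fin 2 → ℤ) (K e : ℕ) (he : 0 < e) (z1 z2 : Fin 2 → ℤ) (n : ℕ) :
    ∀ l : List α, l.length = n → (∀ x ∈ l, ∀ i, |y x i| ≤ K) →
    (∀ x ∈ l, ∃ p r : ℕ, ∀ i, e * y x i = p * z1 i + r * z2 i) →
    ∃ (sm : List α) (a b : ℕ), (∀ x ∈ sm, x ∈ l) ∧ sm.length ≤ e * (2 * K + 1) ^ 2 ∧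
      ∀ i, (l.map fun x => y x i).sum = (sm.map fun x => y x i).sum + a * z1 i + b * z2 i := by
  classical
  induction n using Nat.strong_induction_on with
  | _ n ih =>
  intro l hn hK hz
  by_cases hs : l.length ≤ e * (2 * K + 1) ^ 2
  · exact ⟨l, 0, 0, fun x h => h, hs, by simp⟩
  -- find a frequent value
  have hfreq : ∃ v : ℤ × ℤ, e ≤ (l.filter fun x => (y x 0, y x 1) = v).length := by
    by_contra hcon
    push Not at hcon
    set box : Finset (ℤ × ℤ) := Finset.Icc (-(K : ℤ)) K ×ˢ Finset.Icc (-(K : ℤ)) K with hbox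
    have hcard : box.card = (2 * K + 1) ^ 2 := by
      rw [hbox, Finset.card_product, Int.card_Icc]
      have : ((K : ℤ) + 1 - -(K : ℤ)).toNat = 2 * K + 1 := by omega
      rw [this]; ring
    have hsum : ∀ l : List α, (∀ x ∈ l, ∀ i, |y x i| ≤ K) →
        l.length = ∑ v ∈ box, (l.filter fun x => (y x 0, y x 1) = v).length := by
      intro l
      induction l with
      | nil => simp
      | cons a l ih2 =>
        intro h
        have h1 := ih2 (fun x hx => h x (by simp [hx]))
        have h2 : ∀ v : ℤ × ℤ, ((a :: l).filter fun x => (y x 0, y x 1) = v).length =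
            (l.filter fun x => (y x 0, y x 1) = v).length + if (y a 0, y a 1) = v then 1 else 0 := by
          intro v
          rw [List.filter_cons]
          by_cases hv : (y a 0, y a 1) = v <;> simp [hv]
        rw [Finset.sum_congr rfl (fun v _ => h2 v), Finset.sum_add_distrib, ← h1,
          Finset.sum_ite_eq]
        have h3 := abs_le.mp (h a (by simp) 0)
        have h4 := abs_le.mp (h a (by simp) 1)
        have : (y a 0, y a 1) ∈ box := by
          simp only [hbox, Finset.mem_product, Finset.mem_Icc]; exact ⟨h3, h4⟩
        simp [this]
    have h1 := hsum l hK
    have h2 : ∑ v ∈ box, (l.filter fun x => (y x 0, y x 1) = v).length ≤ ∑ v ∈ box, e :=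
      Finset.sum_le_sum fun v _ => (hcon v).le
    rw [Finset.sum_const, hcard, smul_eq_mul] at h2
    apply hs
    rw [h1]; linarith [mul_comm e ((2 * K + 1) ^ 2)]
  obtain ⟨v, hv⟩ := hfreq
  set F := l.filter fun x => (y x 0, y x 1) = v with hF
  set G := l.filter fun x => ¬ ((y x 0, y x 1) = v) with hG
  have hperm : l.Perm (F.take e ++ (F.drop e ++ G)) := by
    rw [← List.append_assoc, List.take_append_drop]
    have := List.filter_append_perm (fun x => decide ((y x 0, y x 1) = v)) l
    refine this.symm.trans ?_
    rw [hF, hG]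
    simp
  have hlen := hperm.length_eq
  have hte : (F.take e).length = e := by simp [hv]
  have hmem : ∀ x ∈ F.drop e ++ G, x ∈ l := fun x hx => hperm.mem_iff.mpr (by
    rw [List.mem_append]; exact Or.inr hx)
  have hFne : 0 < F.length := by omega
  obtain ⟨x0, hx0⟩ := List.exists_mem_of_length_pos hFne
  have hx0' := List.mem_filter.mp hx0
  obtain ⟨p, r, hpr⟩ := hz x0 hx0'.1
  have hval : ∀ x ∈ F, ∀ i, y x i = y x0 i := by
    intro x hx
    have h1 := (List.mem_filter.mp hx).2
    have h2 := hx0'.2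
    simp only [decide_eq_true_eq] at h1 h2
    have h3 := h1.trans h2.symm
    simp only [Prod.mk.injEq] at h3
    intro i; fin_cases i
    · exact h3.1
    · exact h3.2
  have hsumF : ∀ i, ((F.take e).map fun x => y x i).sum = e * y x0 i := by
    intro i
    have : (F.take e).map (fun x => y x i) = (F.take e).map (fun _ => y x0 i) :=
      List.map_congr_left fun x hx => hval x (List.mem_of_mem_take hx) i
    rw [this, List.map_const', List.sum_replicate, hte]; simp
  obtain ⟨sm, a, b, g1, g2, g3⟩ := ih (F.drop e ++ G).length (by
      rw [List.length_append, hte] at hlen; omega) _ rfl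
    (fun x hx => hK x (hmem x hx)) (fun x hx => hz x (hmem x hx))
  refine ⟨sm, a + p, b + r, fun x hx => hmem x (g1 x hx), g2, fun i => ?_⟩
  rw [(hperm.map fun x => y x i).sum_eq, List.map_append, List.sum_append, g3 i, hsumF, hpr]
  push_cast; ring

theorem num_realize (x y θ : Fin 2 → ℤ) (M K Θ : ℕ) (hx : ∀ i, |x i| ≤ M) (hy : ∀ i, |y i| ≤ K)
    (hθ : ∀ i, |θ i| ≤ Θ) (hd : x 0 * y 1 - x 1 * y 0 ≠ 0) :
    ∃ N e1 e2 c : ℕ, 1 ≤ N ∧ 1 ≤ c ∧ c ≤ 2 * M * K ∧ N ≤ 2 * Θ * K + 2 * M * Θ + 1 ∧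
      e1 ≤ 2 * N ∧ e2 ≤ 2 * N ∧
      ∀ i, (N : ℤ) * y i = c * θ i + e1 * x i + e2 * (y i - x i) := by
  have mulb : ∀ (a b : ℤ) (A B : ℕ), |a| ≤ A → |b| ≤ B → |a * b| ≤ A * B := by
    intro a b A B ha hb
    rw [abs_mul]; exact mul_le_mul ha hb (abs_nonneg _) (by positivity)
  have hdet : ∀ (a b : Fin 2 → ℤ) (A B : ℕ), (∀ i, |a i| ≤ A) → (∀ i, |b i| ≤ B) →
      |a 0 * b 1 - a 1 * b 0| ≤ 2 * A * B := by
    intro a b A B ha hb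
    have h1 := mulb _ _ A B (ha 0) (hb 1)
    have h2 := mulb _ _ A B (ha 1) (hb 0)
    have h3 := abs_sub (a 0 * b 1) (a 1 * b 0)
    linarith
  obtain ⟨σ, hσ, hσd⟩ : ∃ σ : ℤ, (σ = 1 ∨ σ = -1) ∧ 0 < σ * (x 0 * y 1 - x 1 * y 0) := by
    rcases lt_or_gt_of_ne hd with h | h
    · exact ⟨-1, Or.inr rfl, by linarith⟩
    · exact ⟨1, Or.inl rfl, by linarith⟩
  set D := σ * (x 0 * y 1 - x 1 * y 0) with hD
  set s := σ * (θ 0 * y 1 - θ 1 * y 0) with hs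
  set t := σ * (x 0 * θ 1 - x 1 * θ 0) with ht
  have habs : ∀ z : ℤ, |σ * z| = |z| := by
    intro z; rcases hσ with h | h <;> simp [h]
  have bD : |D| ≤ 2 * M * K := by rw [hD, habs]; exact hdet x y M K hx hy
  have bs : |s| ≤ 2 * Θ * K := by rw [hs, habs]; exact hdet θ y Θ K hθ hy
  have bt : |t| ≤ 2 * M * Θ := by rw [ht, habs]; exact hdet x θ M Θ hx hθ
  have hid : ∀ i, D * θ i = s * x i + t * y i := by
    intro i; fin_cases i
    · show D * θ 0 = s * x 0 + t * y 0
      rw [hD, hs, ht]; ring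
    · show D * θ 1 = s * x 1 + t * y 1
      rw [hD, hs, ht]; ring
  have bs' := abs_le.mp (le_refl |s|)
  have bt' := abs_le.mp (le_refl |t|)
  obtain ⟨N, hN⟩ := Int.eq_ofNat_of_zero_le (a := |s| + |t| + 1) (by positivity)
  obtain ⟨c, hc⟩ := Int.eq_ofNat_of_zero_le hσd.le
  obtain ⟨e1, he1⟩ := Int.eq_ofNat_of_zero_le (a := (N : ℤ) - s - t) (by linarith)
  obtain ⟨e2, he2⟩ := Int.eq_ofNat_of_zero_le (a := (N : ℤ) - t) (by linarith [abs_nonneg s])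
  have hs0 := abs_nonneg s
  have ht0 := abs_nonneg t
  refine ⟨N, e1, e2, c, ?_, ?_, ?_, ?_, ?_, ?_, ?_⟩
  · zify; linarith
  · zify; linarith
  · zify; rw [← hc]; exact (le_abs_self _).trans bD
  · zify; linarith
  · zify; linarith
  · zify; linarith
  · intro i
    rw [← hc, hid, ← he1, ← he2]; ring

def NB (M K Θ : ℕ) : ℕ := 2 * M * K + (2 * Θ * K + 2 * M * Θ + 1)
def LB (n M K Θ P S : ℕ) : ℕ :=
  2 * K * K * n + (S * (2 * M * K) + (2 * NB M K Θ + 2 * NB M K Θ * P) * n)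

theorem realize {T : Finset (Trans 2)} {n q M K Θ P S : ℕ} {π₀ : List (Trans 2)}
    (h0 : IsPathFrom q q π₀) (hT : ∀ t ∈ π₀, t ∈ T) (hS : π₀.length ≤ S)
    (hθ : ∀ i, |disp π₀ i| ≤ Θ)
    (B : List (List (Trans 2))) (hB : ∀ c ∈ B, CycOn T n q π₀ c) (hP : B.length ≤ P)
    (hM : ∀ c ∈ B, ∀ i, |disp c i| ≤ M) (hK : ∀ i, |disp B.flatten i| ≤ K)
    (hne : disp B.flatten ≠ 0) :
    ∃ (N : ℕ) (β : List (Trans 2)) (r : ℕ), 1 ≤ N ∧ N ≤ NB M K Θ ∧ Vis q π₀ r ∧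
      IsPathFrom r r β ∧ (∀ t ∈ β, t ∈ T) ∧ β.length ≤ LB n M K Θ P S ∧ β ≠ [] ∧
      ∀ i, disp β i = N * disp B.flatten i := by
  set y := disp B.flatten with hy
  have hy2 : 0 < y 0 * y 0 + y 1 * y 1 := by
    by_contra hcon
    apply hne
    have h1 : y 0 * y 0 = 0 := by nlinarith [mul_self_nonneg (y 0), mul_self_nonneg (y 1)]
    have h2 : y 1 * y 1 = 0 := by nlinarith [mul_self_nonneg (y 0), mul_self_nonneg (y 1)]
    funext i; fin_cases i
    · simpa using h1
    · simpa using h2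
  -- it suffices to do everything but nonemptiness
  suffices h : ∃ (N : ℕ) (β : List (Trans 2)) (r : ℕ), 1 ≤ N ∧ N ≤ NB M K Θ ∧ Vis q π₀ r ∧
      IsPathFrom r r β ∧ (∀ t ∈ β, t ∈ T) ∧ β.length ≤ LB n M K Θ P S ∧
      ∀ i, disp β i = N * y i by
    obtain ⟨N, β, r, a1, a2, a3, a4, a5, a6, a7⟩ := h
    refine ⟨N, β, r, a1, a2, a3, a4, a5, a6, ?_, a7⟩
    rintro rfl
    have hN : (0 : ℤ) < N := by exact_mod_cast a1
    have b0 := a7 0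
    have b1 := a7 1
    simp only [disp_nil, Pi.zero_apply, zero_eq_mul] at b0 b1
    have c0 : y 0 = 0 := by rcases b0 with h | h; omega; exact h
    have c1 : y 1 = 0 := by rcases b1 with h | h; omega; exact h
    rw [c0, c1] at hy2; simp at hy2
  by_cases hpar : ∀ c ∈ B, disp c 0 * y 1 - disp c 1 * y 0 = 0
  · have hex : ∃ c ∈ B, 0 < disp c 0 * y 0 + disp c 1 * y 1 := by
      by_contra hcon
      push Not at hcon
      have : (B.map fun c => disp c 0 * y 0 + disp c 1 * y 1).sum = y 0 * y 0 + y 1 * y 1 := by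
        rw [List.sum_map_add, List.sum_map_mul_right, List.sum_map_mul_right,
          ← disp_flatten_apply, ← disp_flatten_apply]
      have h2 : (B.map fun c => disp c 0 * y 0 + disp c 1 * y 1).sum ≤ 0 := by
        refine le_of_le_of_eq (List.sum_le_card_nsmul _ 0 ?_) (by simp)
        intro z hz
        obtain ⟨c, hc, rfl⟩ := List.mem_map.mp hz
        exact hcon c hc
      linarith
    obtain ⟨c, hc, hpos⟩ := hex
    obtain ⟨c1, c2, r, c3, c4⟩ := hB c hc
    obtain ⟨N, hN⟩ := Int.eq_ofNat_of_zero_le hpos.le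
    obtain ⟨m, hm⟩ := Int.eq_ofNat_of_zero_le hy2.le
    have hp := hpar c hc
    have mulb : ∀ (a b : ℤ) (A B : ℕ), |a| ≤ A → |b| ≤ B → a * b ≤ A * B := by
      intro a b A B ha hb
      refine (le_abs_self _).trans ?_
      rw [abs_mul]; exact mul_le_mul ha hb (abs_nonneg _) (by positivity)
    refine ⟨N, (List.replicate m c).flatten, r, ?_, ?_, c3, path_rep r c c4 m,
      fun t ht => c1 t (mem_rep ht), ?_, ?_⟩
    · zify; omega
    · have h1 := mulb _ _ _ _ (hM c hc 0) (hK 0)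
      have h2 := mulb _ _ _ _ (hM c hc 1) (hK 1)
      have : N ≤ 2 * M * K := by zify; rw [← hN]; linarith
      unfold NB; omega
    · have h1 := mulb _ _ _ _ (hK 0) (hK 0)
      have h2 := mulb _ _ _ _ (hK 1) (hK 1)
      have h3 : m ≤ 2 * K * K := by zify; rw [← hm]; linarith
      have h4 := flatten_length_le (List.replicate m c) n (fun x hx => by
        rw [List.eq_of_mem_replicate hx]; exact c2)
      rw [List.length_replicate] at h4
      have h5 : m * n ≤ 2 * K * K * n := Nat.mul_le_mul_right _ h3
      unfold LB; omega
    · have hN' : (N : ℤ) = disp c 0 * y 0 + disp c 1 * y 1 := hN.symm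
      have hm' : (m : ℤ) = y 0 * y 0 + y 1 * y 1 := hm.symm
      intro i
      rw [disp_rep, hN', hm']
      fin_cases i
      · show (y 0 * y 0 + y 1 * y 1) * disp c 0 = (disp c 0 * y 0 + disp c 1 * y 1) * y 0
        linear_combination y 1 * hp
      · show (y 0 * y 0 + y 1 * y 1) * disp c 1 = (disp c 0 * y 0 + disp c 1 * y 1) * y 1
        linear_combination - y 0 * hp
  · push Not at hpar
    obtain ⟨x, hx, hdet⟩ := hpar
    obtain ⟨N, e1, e2, c, hN, hc, hcb, hNb, he1, he2, hid⟩ :=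
      num_realize (disp x) y (disp π₀) M K Θ (hM x hx) hK hθ hdet
    obtain ⟨b1, b2, hb⟩ := List.append_of_mem hx
    set E := List.replicate e1 x ++ (List.replicate e2 (b1 ++ b2)).flatten with hE
    have hmemE : ∀ z ∈ E, z ∈ B := by
      intro z hz
      rw [hE, List.mem_append] at hz
      rcases hz with hz | hz
      · rw [List.eq_of_mem_replicate hz]; exact hx
      · simp only [List.mem_flatten, List.mem_replicate] at hz
        obtain ⟨w, ⟨_, rfl⟩, hz⟩ := hz
        rw [hb]; simp at hz ⊢; tauto
    obtain ⟨π₁, g1, g2, g3, g4, g5⟩ := insertion h0 hT E (fun z hz => hB z (hmemE z hz))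
    have hEd : ∀ i, disp E.flatten i = e1 * disp x i + e2 * (y i - disp x i) := by
      intro i
      have h1 : y i - disp x i = disp (b1 ++ b2).flatten i := by
        rw [hy, hb]
        simp only [List.flatten_append, List.flatten_cons, disp_append, Pi.add_apply]; ring
      rw [h1, hE, List.flatten_append, disp_append, Pi.add_apply, disp_rep]
      congr 1
      rw [List.flatten_flatten, List.map_replicate, disp_rep]
    refine ⟨N, π₁ ++ (List.replicate (c - 1) π₀).flatten, q, hN, by unfold NB; omega, Or.inl rfl, ?_,
      ?_, ?_, ?_⟩
    · rw [path_append]; exact ⟨q, g1, path_rep q π₀ h0 _⟩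
    · intro t ht
      rcases List.mem_append.mp ht with ht | ht
      · exact g2 t ht
      · exact hT t (mem_rep ht)
    · have h4 := flatten_length_le (List.replicate (c - 1) π₀) S (fun x hx => by
        rw [List.eq_of_mem_replicate hx]; exact hS)
      rw [List.length_replicate] at h4
      have h5 : E.length ≤ 2 * NB M K Θ + 2 * NB M K Θ * P := by
        have h6 := flatten_length_le (List.replicate e2 (b1 ++ b2)) P (fun x hx => by
          rw [List.eq_of_mem_replicate hx]
          have := congrArg List.length hb
          simp at this ⊢; omega)
        rw [List.length_replicate] at h6
        have h7 : N ≤ NB M K Θ := by unfold NB; omega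
        have h8 : e2 * P ≤ 2 * NB M K Θ * P := Nat.mul_le_mul_right _ (by omega)
        rw [hE, List.length_append, List.length_replicate]
        omega
      have h9 : E.length * n ≤ (2 * NB M K Θ + 2 * NB M K Θ * P) * n := Nat.mul_le_mul_right _ h5
      have h10 : S + (c - 1) * S ≤ S * (2 * M * K) := by
        have : S + (c - 1) * S = S * c := by
          obtain ⟨k, rfl⟩ : ∃ k, c = k + 1 := ⟨c - 1, by omega⟩
          simp; ring
        rw [this]; exact Nat.mul_le_mul_left _ hcb
      rw [List.length_append]
      unfold LB; omega
    · intro i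
      rw [disp_append, Pi.add_apply, g3, Pi.add_apply, disp_rep, hEd, hid]
      push_cast [hc]
      ring
end lin

section assembly

theorem prefix_app {α : Type} {τ A B : List α} (h : τ <+: A ++ B) :
    τ <+: A ∨ ∃ σ, σ <+: B ∧ τ = A ++ σ := by
  obtain ⟨r, hr⟩ := h
  rcases List.append_eq_append_iff.mp hr with ⟨m, h1, h2⟩ | ⟨m, h1, h2⟩
  · exact Or.inl ⟨m, h1.symm⟩
  · exact Or.inr ⟨m, ⟨r, h2.symm⟩, h1⟩

theorem prefix_rep {α : Type} (β : List α) (a : ℕ) : ∀ τ, τ <+: (List.replicate a β).flatten →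
    ∃ k σ, k ≤ a ∧ σ <+: β ∧ τ = (List.replicate k β).flatten ++ σ := by
  induction a with
  | zero =>
    intro τ h
    simp at h
    exact ⟨0, [], le_refl _, List.nil_prefix, by simp [h]⟩
  | succ a ih =>
    intro τ h
    rw [List.replicate_succ, List.flatten_cons] at h
    rcases prefix_app h with h | ⟨σ, h5, rfl⟩
    · exact ⟨0, τ, by omega, h, by simp⟩
    · obtain ⟨k, σ', hk, hσ, rfl⟩ := ih σ h5
      exact ⟨k + 1, σ', by omega, hσ, by simp [List.replicate_succ]⟩

theorem prefix_disp {T : Finset (Trans 2)} {τ A : List (Trans 2)} (h : τ <+: A)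
    (hA : ∀ t ∈ A, t ∈ T) (i : Fin 2) : |disp τ i| ≤ A.length * tnorm T := by
  have h1 := disp_bound (T := T) (π := τ) (fun t ht => hA t (h.subset ht)) i
  have h2 : (τ.length : ℤ) ≤ A.length := by exact_mod_cast h.length_le
  have h3 : (0 : ℤ) ≤ tnorm T := by positivity
  nlinarith

theorem pre_est {T : Finset (Trans 2)} (α0 β1 α1 β2 α2 : List (Trans 2)) (a b : ℕ)
    (h0 : ∀ t ∈ α0, t ∈ T) (h1 : ∀ t ∈ β1, t ∈ T) (h2 : ∀ t ∈ α1, t ∈ T) (h3 : ∀ t ∈ β2, t ∈ T)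
    (h4 : ∀ t ∈ α2, t ∈ T) (τ : List (Trans 2))
    (h : τ <+: α0 ++ ((List.replicate a β1).flatten ++ (α1 ++ ((List.replicate b β2).flatten ++ α2))))
    (i : Fin 2) :
    ∃ k1 k2 : ℕ, k1 ≤ a ∧ k2 ≤ b ∧ |disp τ i - k1 * disp β1 i - k2 * disp β2 i| ≤
      (α0.length + β1.length + α1.length + β2.length + α2.length) * tnorm T := by
  have b0 := abs_le.mp (disp_bound h0 i)
  have b2 := abs_le.mp (disp_bound h2 i)
  have p0 : (0 : ℤ) ≤ α0.length * tnorm T := by positivity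
  have p1 : (0 : ℤ) ≤ β1.length * tnorm T := by positivity
  have p2 : (0 : ℤ) ≤ α1.length * tnorm T := by positivity
  have p3 : (0 : ℤ) ≤ β2.length * tnorm T := by positivity
  have p4 : (0 : ℤ) ≤ α2.length * tnorm T := by positivity
  rcases prefix_app h with h | ⟨τ1, hp1, rfl⟩
  · have := abs_le.mp (prefix_disp h h0 i)
    exact ⟨0, 0, by omega, by omega, abs_le.mpr ⟨by push_cast; linarith, by push_cast; linarith⟩⟩
  rcases prefix_app hp1 with h | ⟨τ2, hp2, rfl⟩
  · obtain ⟨k, σ, hk, hσ, rfl⟩ := prefix_rep _ _ _ h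
    have := abs_le.mp (prefix_disp hσ h1 i)
    refine ⟨k, 0, hk, by omega, ?_⟩
    simp only [disp_append, Pi.add_apply, disp_rep]
    exact abs_le.mpr ⟨by push_cast; linarith, by push_cast; linarith⟩
  rcases prefix_app hp2 with h | ⟨τ3, hp3, rfl⟩
  · have := abs_le.mp (prefix_disp h h2 i)
    refine ⟨a, 0, le_refl _, by omega, ?_⟩
    simp only [disp_append, Pi.add_apply, disp_rep]
    exact abs_le.mpr ⟨by push_cast; linarith, by push_cast; linarith⟩
  rcases prefix_app hp3 with h | ⟨τ4, hp4, rfl⟩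
  · obtain ⟨k, σ, hk, hσ, rfl⟩ := prefix_rep _ _ _ h
    have := abs_le.mp (prefix_disp hσ h3 i)
    refine ⟨a, k, le_refl _, hk, ?_⟩
    simp only [disp_append, Pi.add_apply, disp_rep]
    exact abs_le.mpr ⟨by push_cast; linarith, by push_cast; linarith⟩
  · have := abs_le.mp (prefix_disp hp4 h4 i)
    refine ⟨a, b, le_refl _, le_refl _, ?_⟩
    simp only [disp_append, Pi.add_apply, disp_rep]
    exact abs_le.mpr ⟨by push_cast; linarith, by push_cast; linarith⟩

/-- `ρ` is a good scheme realizing displacement `w` -/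
def Good (T : Finset (Trans 2)) (q F : ℕ) (w : Vec 2) : Prop :=
  ∃ (ρ : LPS 2) (e : List ℕ), IsLPSFrom T q q ρ ∧ lpsLen ρ ≤ F ∧ numCycles ρ ≤ 2 ∧
    e.length = numCycles ρ ∧ (∀ t ∈ lpsWord ρ e, t ∈ T) ∧ IsPathFrom q q (lpsWord ρ e) ∧
    disp (lpsWord ρ e) = w ∧
    ∀ τ, τ <+: lpsWord ρ e → ∀ i, min 0 (w i) - 2 * (F * tnorm T : ℕ) ≤ disp τ i

theorem good0 {T : Finset (Trans 2)} {q F : ℕ} (π : List (Trans 2)) (hπ : IsPathFrom q q π)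
    (hT : ∀ t ∈ π, t ∈ T) (hF : π.length ≤ F) : Good T q F (disp π) := by
  refine ⟨(π, []), [], ⟨?_, ?_, ?_⟩, ?_, ?_, ?_, ?_, ?_, ?_, ?_⟩
  · simpa [lpsSupport] using hT
  · simpa [lpsSupport] using hπ
  · simp
  · simpa [lpsLen, lpsSupport] using hF
  · simp [numCycles]
  · simp [numCycles]
  · simpa [lpsWord] using hT
  · simpa [lpsWord] using hπ
  · simp [lpsWord]
  · intro τ hτ i
    simp only [lpsWord, List.zipWith_nil_left, List.flatten_nil, List.append_nil] at hτ
    have h1 := abs_le.mp (prefix_disp hτ hT i)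
    have h2 : ((π.length * tnorm T : ℕ) : ℤ) ≤ (F * tnorm T : ℕ) := by
      exact_mod_cast Nat.mul_le_mul_right _ hF
    have h3 : (0 : ℤ) ≤ (F * tnorm T : ℕ) := by positivity
    have h4 : min 0 (disp π i) ≤ 0 := min_le_left _ _
    push_cast at h1 h2 h3 ⊢
    linarith

theorem good2 {T : Finset (Trans 2)} {q F r1 r2 : ℕ} (α0 β1 α1 β2 α2 : List (Trans 2)) (a b : ℕ)
    (h0 : ∀ t ∈ α0, t ∈ T) (h1 : ∀ t ∈ β1, t ∈ T) (h2 : ∀ t ∈ α1, t ∈ T) (h3 : ∀ t ∈ β2, t ∈ T)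
    (h4 : ∀ t ∈ α2, t ∈ T) (p0 : IsPathFrom q r1 α0) (p1 : IsPathFrom r1 r1 β1)
    (p2 : IsPathFrom r1 r2 α1) (p3 : IsPathFrom r2 r2 β2) (p4 : IsPathFrom r2 q α2)
    (n1 : β1 ≠ []) (n2 : β2 ≠ []) (s : Fin 2 → ℤ) (hs : ∀ i, s i = 1 ∨ s i = -1)
    (s1 : ∀ i, 0 ≤ s i * disp β1 i) (s2 : ∀ i, 0 ≤ s i * disp β2 i)
    (hF : (α0 ++ α1 ++ α2).length + β1.length + β2.length ≤ F) (w : Vec 2)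
    (hw : ∀ i, w i = disp (α0 ++ α1 ++ α2) i + a * disp β1 i + b * disp β2 i) :
    Good T q F w := by
  have hword : lpsWord (α0, [(β1, α1), (β2, α2)]) [a, b] =
      α0 ++ ((List.replicate a β1).flatten ++ (α1 ++ ((List.replicate b β2).flatten ++ α2))) := by
    simp [lpsWord]
  have hsup : lpsSupport (α0, [(β1, α1), (β2, α2)]) = α0 ++ (β1 ++ (α1 ++ (β2 ++ α2))) := by
    simp [lpsSupport]
  refine ⟨(α0, [(β1, α1), (β2, α2)]), [a, b], ⟨?_, ?_, ?_⟩, ?_, ?_, ?_, ?_, ?_, ?_, ?_⟩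
  · rw [hsup]; intro t ht
    simp only [List.mem_append] at ht
    rcases ht with h | h | h | h | h
    exacts [h0 t h, h1 t h, h2 t h, h3 t h, h4 t h]
  · rw [hsup]
    simp only [path_append]
    exact ⟨r1, p0, r1, p1, r2, p2, r2, p3, p4⟩
  · intro x hx
    simp only [List.mem_cons, List.not_mem_nil, or_false] at hx
    rcases hx with rfl | rfl
    · exact ⟨n1, r1, p1⟩
    · exact ⟨n2, r2, p3⟩
  · rw [lpsLen, hsup]; simp at hF ⊢; omega
  · simp [numCycles]
  · simp [numCycles]
  · rw [hword]; intro t ht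
    simp only [List.mem_append] at ht
    rcases ht with h | h | h | h | h
    exacts [h0 t h, h1 t (mem_rep h), h2 t h, h3 t (mem_rep h), h4 t h]
  · rw [hword]
    simp only [path_append]
    exact ⟨r1, p0, r1, path_rep _ _ p1 _, r2, p2, r2, path_rep _ _ p3 _, p4⟩
  · rw [hword]
    funext i
    rw [hw]
    simp only [disp_append, Pi.add_apply, disp_rep]; ring
  · intro τ hτ i
    rw [hword] at hτ
    obtain ⟨k1, k2, hk1, hk2, hk⟩ := pre_est α0 β1 α1 β2 α2 a b h0 h1 h2 h3 h4 τ hτ i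
    have hk' := abs_le.mp hk
    have hL : ((α0.length + β1.length + α1.length + β2.length + α2.length) * tnorm T : ℤ) ≤
        (F * tnorm T : ℕ) := by
      have : (α0.length + β1.length + α1.length + β2.length + α2.length) * tnorm T ≤ F * tnorm T :=
        Nat.mul_le_mul_right _ (by simp at hF; omega)
      exact_mod_cast this
    have hL0 : (0 : ℤ) ≤ (F * tnorm T : ℕ) := by positivity
    have hdα : |disp (α0 ++ α1 ++ α2) i| ≤ (F * tnorm T : ℕ) := by
      have h5 := disp_bound (T := T) (π := α0 ++ α1 ++ α2) (by
        intro t ht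
        simp only [List.mem_append] at ht
        rcases ht with (h | h) | h
        exacts [h0 t h, h2 t h, h4 t h]) i
      refine h5.trans ?_
      have : (α0 ++ α1 ++ α2).length * tnorm T ≤ F * tnorm T := Nat.mul_le_mul_right _ (by omega)
      exact_mod_cast this
    have hdα' := abs_le.mp hdα
    have z1 : (0 : ℤ) ≤ k1 := by positivity
    have z2 : (0 : ℤ) ≤ k2 := by positivity
    have z3 : (k1 : ℤ) ≤ a := by exact_mod_cast hk1
    have z4 : (k2 : ℤ) ≤ b := by exact_mod_cast hk2
    have t1 := s1 i
    have t2 := s2 i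
    rcases hs i with h | h
    · rw [h, one_mul] at t1 t2
      have m1 := mul_nonneg z1 t1
      have m2 := mul_nonneg z2 t2
      have := min_le_left 0 (w i)
      linarith
    · rw [h] at t1 t2
      have t1' : disp β1 i ≤ 0 := by linarith
      have t2' : disp β2 i ≤ 0 := by linarith
      have m1 := mul_le_mul_of_nonpos_right z3 t1'
      have m2 := mul_le_mul_of_nonpos_right z4 t2'
      have := min_le_right 0 (w i)
      have := hw i
      linarith

theorem good_of {T : Finset (Trans 2)} {q F r1 r2 : ℕ} (π β1 β2 : List (Trans 2)) (a b : ℕ)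
    (h0 : ∀ t ∈ π, t ∈ T) (h1 : ∀ t ∈ β1, t ∈ T) (h3 : ∀ t ∈ β2, t ∈ T)
    (p0 : IsPathFrom q q π) (p1 : IsPathFrom r1 r1 β1) (p3 : IsPathFrom r2 r2 β2)
    (v1 : Vis q π r1) (v2 : Vis q π r2)
    (n1 : β1 ≠ []) (n2 : β2 ≠ []) (s : Fin 2 → ℤ) (hs : ∀ i, s i = 1 ∨ s i = -1)
    (s1 : ∀ i, 0 ≤ s i * disp β1 i) (s2 : ∀ i, 0 ≤ s i * disp β2 i)
    (hF : π.length + β1.length + β2.length ≤ F) (w : Vec 2)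
    (hw : ∀ i, w i = disp π i + a * disp β1 i + b * disp β2 i) :
    Good T q F w := by
  obtain ⟨x, y, rfl, hx, hy⟩ := vis_split p0 v1
  have hcase : Vis q x r2 ∨ Vis r1 y r2 := by
    rcases v2 with h | ⟨t, ht, h⟩
    · exact Or.inl (Or.inl h)
    · rcases List.mem_append.mp ht with ht | ht
      · exact Or.inl (Or.inr ⟨t, ht, h⟩)
      · exact Or.inr (Or.inr ⟨t, ht, h⟩)
  rcases hcase with hc | hc
  · obtain ⟨u, v, rfl, hu, hv⟩ := vis_split hx hc
    refine good2 u β2 v β1 y b a ?_ h3 ?_ h1 ?_ hu p3 hv p1 hy n2 n1 s hs s2 s1 (by omega) w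
      (fun i => by rw [hw]; ring) <;> intro t ht <;> apply h0 <;> simp [ht]
  · obtain ⟨u, v, rfl, hu, hv⟩ := vis_split hy hc
    refine good2 x β1 u β2 v a b ?_ h1 ?_ h3 ?_ hx p1 hu p3 hv n1 n2 s hs s1 s2
      (by rw [List.append_assoc]; omega) w
      (fun i => by rw [hw, List.append_assoc]) <;> intro t ht <;> apply h0 <;> simp [ht]

def MB (n : ℕ) : ℕ := n * n
def SB (n : ℕ) : ℕ := n * (n + 1)
def ThB (n : ℕ) : ℕ := SB n * n
def KB (n : ℕ) : ℕ := PB (MB n) * MB n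
def EB (n : ℕ) : ℕ := (KB n * KB n + 2 * KB n) * (NB (MB n) (KB n) (ThB n) * NB (MB n) (KB n) (ThB n))
def FB (n : ℕ) : ℕ := SB n + EB n * (2 * KB n + 1) ^ 2 * PB (MB n) * n +
  2 * LB n (MB n) (KB n) (ThB n) (PB (MB n)) (SB n)

theorem core {Q : Finset ℕ} {T : Finset (Trans 2)} (hT : ∀ t ∈ T, t.1 ∈ Q ∧ t.2.2 ∈ Q)
    {q : ℕ} (hq : q ∈ Q) {n : ℕ} (hn : 1 ≤ n) (hQn : Q.card ≤ n) (hTn : tnorm T ≤ n)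
    (π : List (Trans 2)) (hπ : IsPathFrom q q π) (hπT : ∀ t ∈ π, t ∈ T) :
    Good T q (FB n) (disp π) := by
  obtain ⟨π₀, E, g1, g2, g3, g4, g5, g6⟩ := skeleton hT hq _ π rfl hπ hπT
  have hS : π₀.length ≤ SB n := g3.trans (Nat.mul_le_mul hQn (by omega))
  have hθ : ∀ i, |disp π₀ i| ≤ ThB n := by
    intro i
    refine (disp_bound g2 i).trans ?_
    exact_mod_cast Nat.mul_le_mul hS hTn
  have hE : ∀ c ∈ E, CycOn T n q π₀ c := fun c hc =>
    ⟨(g5 c hc).1, (g5 c hc).2.1.trans hQn, (g5 c hc).2.2⟩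
  have hEM : ∀ c ∈ E, ∀ i, |disp c i| ≤ MB n := by
    intro c hc i
    refine (disp_bound (hE c hc).1 i).trans ?_
    exact_mod_cast Nat.mul_le_mul (hE c hc).2.1 hTn
  obtain ⟨Bs, s, hs, hp, hB⟩ := quad_blocks (MB n) (by unfold MB; nlinarith) E hEM
  have hBE : ∀ B ∈ Bs, ∀ c ∈ B, c ∈ E := fun B hB' c hc =>
    hp.mem_iff.mpr (List.mem_flatten.mpr ⟨B, hB', hc⟩)
  have hBK : ∀ B ∈ Bs, ∀ i, |disp B.flatten i| ≤ KB n := by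
    intro B hB' i
    rw [disp_flatten_apply]
    refine (sum_bound (fun c : List (Trans 2) => disp c i) (MB n) B
      (fun c hc => hEM c (hBE B hB' c hc) i)).trans ?_
    exact_mod_cast Nat.mul_le_mul_right _ (hB B hB').1
  have hEsum : ∀ i, disp E.flatten i = (Bs.map fun B => disp B.flatten i).sum := by
    intro i
    rw [disp_perm hp.flatten, List.flatten_flatten, disp_flatten_apply, List.map_map]; rfl
  have habs : ∀ B ∈ Bs, ∀ i, disp B.flatten i = s i * (disp B.flatten i).natAbs := by
    intro B hB' i
    have h1 := (hB B hB').2 i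
    rcases hs i with h | h <;> rw [h] at h1 ⊢ <;> omega
  by_cases hz : ∃ B ∈ Bs, 0 < (disp B.flatten 0).natAbs + (disp B.flatten 1).natAbs
  · have hcast : ∀ B ∈ Bs, ∀ i, (disp B.flatten i).natAbs ≤ KB n := by
      intro B hB' i
      have := hBK B hB' i
      rw [Int.abs_eq_natAbs] at this
      exact_mod_cast this
    obtain ⟨B1, hB1, B2, hB2, nz1, nz2, e, he, heb, hcar⟩ := carath Bs
      (fun B => (disp B.flatten 0).natAbs) (fun B => (disp B.flatten 1).natAbs) (KB n)
      (fun B hB => hcast B hB 0) (fun B hB => hcast B hB 1) hz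
    have hnz : ∀ B : List (List (Trans 2)),
        0 < (disp B.flatten 0).natAbs + (disp B.flatten 1).natAbs → disp B.flatten ≠ 0 := by
      intro B h h'
      rw [h'] at h; simp at h
    have hreal := fun (B) (hB' : B ∈ Bs) => realize g1 g2 hS hθ B
      (fun c hc => hE c (hBE B hB' c hc)) (hB B hB').1 (fun c hc => hEM c (hBE B hB' c hc)) (hBK B hB')
    obtain ⟨N1, β1, r1, a1, a2, a3, a4, a5, a6, a7, a8⟩ := hreal B1 hB1 (hnz B1 nz1)
    obtain ⟨N2, β2, r2, b1, b2, b3, b4, b5, b6, b7, b8⟩ := hreal B2 hB2 (hnz B2 nz2)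
    have hsgn : ∀ i (k : ℕ), ∀ B ∈ Bs, 0 ≤ s i * (k * disp B.flatten i) := by
      intro i k B hB'
      have := (hB B hB').2 i
      have h2 : (0 : ℤ) ≤ k := by positivity
      nlinarith
    obtain ⟨sm, a, b, m1, m2, m3⟩ := reduce (fun B : List (List (Trans 2)) => disp B.flatten) (KB n)
      (e * (N1 * N2)) (by positivity) (disp β1) (disp β2) _ Bs rfl hBK (by
        intro B hB'
        obtain ⟨p, r, e1, e2⟩ := hcar B hB'
        refine ⟨p * N2, r * N1, ?_⟩
        have e1' : (e : ℤ) * (disp B.flatten 0).natAbs = p * (disp B1.flatten 0).natAbs +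
          r * (disp B2.flatten 0).natAbs := by exact_mod_cast e1
        have e2' : (e : ℤ) * (disp B.flatten 1).natAbs = p * (disp B1.flatten 1).natAbs +
          r * (disp B2.flatten 1).natAbs := by exact_mod_cast e2
        have key : ∀ i, (e : ℤ) * (disp B.flatten i).natAbs = p * (disp B1.flatten i).natAbs +
          r * (disp B2.flatten i).natAbs := by
          intro i; fin_cases i
          · exact e1'
          · exact e2'
        intro i
        rw [a8, b8, habs B hB' i, habs B1 hB1 i, habs B2 hB2 i]
        simp only [Nat.cast_mul]
        linear_combination (N1 * N2 * s i) * key i)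
    obtain ⟨π₁, i1, i2, i3, i4, i5⟩ := insertion g1 g2 sm.flatten (by
      intro c hc
      obtain ⟨B, hBm, hc⟩ := List.mem_flatten.mp hc
      exact hE c (hBE B (m1 B hBm) c hc))
    refine good_of π₁ β1 β2 a b i2 a5 b5 i1 a4 b4 (i5 _ a3) (i5 _ b3) a7 b7 s hs ?_ ?_ ?_ _ ?_
    · intro i; rw [a8]; exact hsgn i N1 B1 hB1
    · intro i; rw [b8]; exact hsgn i N2 B2 hB2
    · have h1 := flatten_length_le sm (PB (MB n)) (fun B hBm => (hB B (m1 B hBm)).1)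
      have h2 : e * (N1 * N2) ≤ EB n := Nat.mul_le_mul heb (Nat.mul_le_mul a2 b2)
      have h3 : sm.flatten.length * n ≤ EB n * (2 * KB n + 1) ^ 2 * PB (MB n) * n := by
        refine Nat.mul_le_mul_right _ (h1.trans (Nat.mul_le_mul_right _ (m2.trans ?_)))
        exact Nat.mul_le_mul_right _ h2
      unfold FB
      omega
    · intro i
      have : disp sm.flatten.flatten i = (sm.map fun B => disp B.flatten i).sum := by
        rw [List.flatten_flatten, disp_flatten_apply, List.map_map]; rfl
      rw [g6, Pi.add_apply, hEsum, m3 i, i3, Pi.add_apply, this]; ring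
  · have h0 : disp E.flatten = 0 := by
      funext i
      rw [hEsum]
      apply List.sum_eq_zero
      intro z hz'
      obtain ⟨B, hB', rfl⟩ := List.mem_map.mp hz'
      push Not at hz
      have := hz B hB'
      fin_cases i
      · show disp B.flatten 0 = 0
        omega
      · show disp B.flatten 1 = 0
        omega
    rw [g6, h0, add_zero]
    refine good0 π₀ g1 g2 (hS.trans ?_)
    unfold FB; omega

def PolyB (f : ℕ → ℕ) : Prop := ∃ c : ℕ, ∀ n, 2 ≤ n → f n ≤ n ^ c

theorem PolyB.const (k : ℕ) : PolyB (fun _ => k) := by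
  refine ⟨k, fun n hn => ?_⟩
  exact (Nat.lt_two_pow_self).le.trans (Nat.pow_le_pow_left hn k)

theorem PolyB.id' : PolyB (fun n => n) := ⟨1, fun n _ => by simp⟩

theorem PolyB.mul {f g : ℕ → ℕ} (hf : PolyB f) (hg : PolyB g) : PolyB (fun n => f n * g n) := by
  obtain ⟨c, hc⟩ := hf
  obtain ⟨e, he⟩ := hg
  exact ⟨c + e, fun n hn => by rw [pow_add]; exact Nat.mul_le_mul (hc n hn) (he n hn)⟩

theorem PolyB.add {f g : ℕ → ℕ} (hf : PolyB f) (hg : PolyB g) : PolyB (fun n => f n + g n) := by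
  obtain ⟨c, hc⟩ := hf
  obtain ⟨e, he⟩ := hg
  refine ⟨c + e + 1, fun n hn => ?_⟩
  have h1 : n ^ c ≤ n ^ (c + e) := Nat.pow_le_pow_right (by omega) (by omega)
  have h2 : n ^ e ≤ n ^ (c + e) := Nat.pow_le_pow_right (by omega) (by omega)
  have h3 := hc n hn
  have h4 := he n hn
  rw [pow_succ]
  nlinarith

theorem PolyB.sq {f : ℕ → ℕ} (hf : PolyB f) : PolyB (fun n => f n ^ 2) := by
  have h := hf.mul hf
  obtain ⟨c, hc⟩ := h
  exact ⟨c, fun n hn => by have := hc n hn; show f n ^ 2 ≤ n ^ c; rw [pow_two]; exact this⟩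

theorem FB_poly : PolyB FB := by
  have hM : PolyB MB := PolyB.id'.mul PolyB.id'
  have hS : PolyB SB := PolyB.id'.mul (PolyB.id'.add (PolyB.const 1))
  have hTh : PolyB ThB := hS.mul PolyB.id'
  have h2M : PolyB (fun n => 2 * MB n + 1) := ((PolyB.const 2).mul hM).add (PolyB.const 1)
  have hP : PolyB (fun n => PB (MB n)) :=
    (((PolyB.const 2).mul (h2M.mul hM)).add (PolyB.const 1)).mul h2M
  have hK : PolyB KB := hP.mul hM
  have hN : PolyB (fun n => NB (MB n) (KB n) (ThB n)) :=
    (((PolyB.const 2).mul hM).mul hK).add (((((PolyB.const 2).mul hTh).mul hK).add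
      (((PolyB.const 2).mul hM).mul hTh)).add (PolyB.const 1))
  have hE : PolyB EB := ((hK.mul hK).add ((PolyB.const 2).mul hK)).mul (hN.mul hN)
  have hL : PolyB (fun n => LB n (MB n) (KB n) (ThB n) (PB (MB n)) (SB n)) :=
    ((((PolyB.const 2).mul hK).mul hK).mul PolyB.id').add ((hS.mul (((PolyB.const 2).mul hM).mul hK)).add
      ((((PolyB.const 2).mul hN).add (((PolyB.const 2).mul hN).mul hP)).mul PolyB.id'))
  exact (hS.add (((hE.mul ((((PolyB.const 2).mul hK).add (PolyB.const 1)).sq)).mul hP).mul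
    PolyB.id')).add ((PolyB.const 2).mul hL)

theorem finite_lists {α : Type} {s : Set α} (hs : s.Finite) (n : ℕ) :
    {l : List α | (∀ x ∈ l, x ∈ s) ∧ l.length ≤ n}.Finite := by
  have : Finite s := hs
  refine ((List.finite_length_le s n).image (List.map Subtype.val)).subset ?_
  rintro l ⟨h1, h2⟩
  refine ⟨l.attach.map (fun x => ⟨x.1, h1 x.1 x.2⟩), ?_, ?_⟩
  · simpa using h2
  · simp

theorem finite_lps (T : Finset (Trans 2)) (F : ℕ) :
    {ρ : LPS 2 | (∃ p q, IsLPSFrom T p q ρ) ∧ lpsLen ρ ≤ F ∧ numCycles ρ ≤ 2}.Finite := by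
  have h1 := finite_lists (s := (T : Set (Trans 2))) T.finite_toSet F
  have h2 := finite_lists (h1.prod h1) 2
  refine (h1.prod h2).subset ?_
  rintro ⟨α0, l⟩ ⟨⟨p, q, h, _, _⟩, hl, hc⟩
  simp only [lpsLen, lpsSupport, List.length_append, List.mem_append] at hl h
  have hsub : ∀ x ∈ l, (x.1 ++ x.2).Sublist (l.map fun s => s.1 ++ s.2).flatten := fun x hx =>
    List.sublist_flatten_of_mem (List.mem_map.mpr ⟨x, hx, rfl⟩)
  refine ⟨⟨fun x hx => h x (Or.inl hx), by simp only; omega⟩, ?_, hc⟩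
  intro x hx
  have hx' := hsub x hx
  have hlen := hx'.length_le
  rw [List.length_append] at hlen
  refine ⟨⟨fun t ht => h t (Or.inr (hx'.subset (by simp [ht]))), by omega⟩,
    ⟨fun t ht => h t (Or.inr (hx'.subset (by simp [ht]))), by omega⟩⟩

end assembly

/-- Proposition, part (a). Reachability between configurations
of a 2-VASS with the same state whose counter values all exceed a polynomial
bound `D` is captured by small linear path schemes with at most two cycles. -/
theorem statement3 :
    ∃ c₁ c₂ : ℕ, ∀ (Q : Finset ℕ) (T : Finset (Trans 2)),
      (∀ t ∈ T, t.1 ∈ Q ∧ t.2.2 ∈ Q) →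
      ∃ D : ℕ, D ≤ (Q.card + tnorm T) ^ c₁ ∧
      ∃ R : Finset (LPS 2),
        (∀ ρ ∈ R, ∃ p q, IsLPSFrom T p q ρ) ∧
        (∀ q ∈ Q, ∀ u v : Vec 2, (∀ i, (D : ℤ) ≤ u i) → (∀ i, (D : ℤ) ≤ v i) →
          (Reach T (NatSet 2) q u q v ↔ SReach T R (NatSet 2) q u q v)) ∧
        (∀ ρ ∈ R, lpsLen ρ ≤ (Q.card + tnorm T) ^ c₂) ∧
        (∀ ρ ∈ R, numCycles ρ ≤ 2) := by
  obtain ⟨c2, hc2⟩ := FB_poly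
  obtain ⟨c1, hc1⟩ : PolyB (fun n => 2 * (FB n * n)) := (PolyB.const 2).mul (FB_poly.mul PolyB.id')
  refine ⟨c1, c2, fun Q T hT => ?_⟩
  by_cases hn : 2 ≤ Q.card + tnorm T
  · set n := Q.card + tnorm T with hn'
    refine ⟨2 * (FB n * tnorm T), ?_, (finite_lps T (FB n)).toFinset, ?_, ?_, ?_, ?_⟩
    · refine le_trans ?_ (hc1 n hn)
      exact Nat.mul_le_mul_left _ (Nat.mul_le_mul_left _ (by omega))
    · intro ρ hρ
      exact ((Set.Finite.mem_toFinset _).mp hρ).1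
    · intro q hq u v hu hv
      constructor
      · rintro ⟨π, hπT, hπ, hu0, hv0, _⟩
        obtain ⟨ρ, e, k1, k2, k3, k4, k5, k6, k7, k8⟩ :=
          core hT hq (n := n) (by omega) (by omega) (by omega) π hπ hπT
        refine ⟨ρ, (Set.Finite.mem_toFinset _).mpr ⟨⟨q, q, k1⟩, k2, k3⟩, lpsWord ρ e, ⟨e, k4, rfl⟩,
          k5, k6, hu0, by rw [k7]; exact hv0, ?_⟩
        intro i _ _ j
        have h1 := k8 _ (List.take_prefix i _) j
        have h2 := hu j
        have h3 := hv j
        rw [hv0, Pi.add_apply] at h3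
        rw [Pi.add_apply]
        push_cast at h1 h2 h3
        rcases min_choice 0 (disp π j) with h | h <;> rw [h] at h1 <;> linarith
      · rintro ⟨ρ, _, π, _, h⟩
        exact ⟨π, h⟩
    · intro ρ hρ
      exact ((Set.Finite.mem_toFinset _).mp hρ).2.1.trans (hc2 n hn)
    · intro ρ hρ
      exact ((Set.Finite.mem_toFinset _).mp hρ).2.2
  · refine ⟨0, Nat.zero_le _, {([], [])}, ?_, ?_, ?_, ?_⟩
    · intro ρ hρ
      rw [Finset.mem_singleton] at hρ
      subst hρ
      exact ⟨0, 0, by simp [lpsSupport], by simp [lpsSupport, IsPathFrom], by simp⟩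
    · intro q hq u v hu hv
      constructor
      · rintro ⟨π, hπT, hπ, hu0, hv0, _⟩
        have hpos : 0 < Q.card := Finset.card_pos.mpr ⟨q, hq⟩
        have ht0 : tnorm T = 0 := by omega
        have hd : disp π = 0 := by
          funext i
          have := disp_bound hπT i
          rw [ht0] at this
          simpa using this
        refine ⟨([], []), by simp, [], ⟨[], by simp [numCycles], by simp [lpsWord]⟩, by simp, rfl, hu0,
          ?_, ?_⟩
        · rw [hv0, hd, disp_nil]
        · intro i h1 h2
          simp at h2; omega
      · rintro ⟨ρ, _, π, _, h⟩
        exact ⟨π, h⟩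
    · intro ρ hρ
      rw [Finset.mem_singleton] at hρ
      subst hρ
      simp [lpsLen, lpsSupport]
    · intro ρ hρ
      rw [Finset.mem_singleton] at hρ
      subst hρ
      simp [numCycles]

end VASS
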